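/- Let n ≥ 1, R > 0, let V : ℝⁿ → ℝ be a bounded measurable real-valued function, let λ ∈ ℂ with Im λ ≠ 0, and let f : ℝⁿ → ℂ be continuous. Suppose u, w : ℝⁿ → ℂ are smooth, satisfy Δ²u + V·u − λ·u = f and Δ²w + V·w − λ·w = u at every point of the closed ball of radius R centered at the origin, and satisfy u(x) = Δu(x) = w(x) = Δw(x) = 0 for every x ∈ ∂B_R. Then (∫_{B_R} |w|² dx)^{1/2} ≤ (1/|Im λ|²)·(∫_{B_R} |f|² dx)^{1/2}. -/

import Mathlib

open MeasureTheory Metric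

/-- The Laplacian of a complex-valued function on `EuclideanSpace ℝ (Fin n)`:
the trace of the second Fréchet derivative. -/
noncomputable def lapC (n : ℕ) (f : EuclideanSpace ℝ (Fin n) → ℂ) (x : EuclideanSpace ℝ (Fin n)) : ℂ :=
  ∑ i : Fin n, fderiv ℝ (fderiv ℝ f) x (EuclideanSpace.single i 1) (EuclideanSpace.single i 1)

/-- Extension by zero of a `C¹` function vanishing on the sphere is Lipschitz. -/
lemma lip_ext {n : ℕ} {R : ℝ} (φ : EuclideanSpace ℝ (Fin n) → ℝ)
    (hφ : ContDiff ℝ 1 φ) (hb : ∀ x ∈ sphere (0 : EuclideanSpace ℝ (Fin n)) R, φ x = 0) :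
    ∃ K, LipschitzWith K ((ball (0 : EuclideanSpace ℝ (Fin n)) R).indicator φ) := by
  obtain ⟨K, hK⟩ := (hφ.contDiffOn (s := closedBall (0 : EuclideanSpace ℝ (Fin n)) R)).exists_lipschitzOnWith
    one_ne_zero (convex_closedBall _ _) (isCompact_closedBall _ _)
  have key : ∀ x y : EuclideanSpace ℝ (Fin n), x ∈ ball (0 : EuclideanSpace ℝ (Fin n)) R →
      y ∉ ball (0 : EuclideanSpace ℝ (Fin n)) R → dist (φ x) 0 ≤ K * dist x y := by
    intro x y hx hy
    have hx' : ‖x‖ < R := by simpa using hx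
    have hy' : R ≤ ‖y‖ := by simpa using hy
    have hc : ContinuousOn (fun t : ℝ => ‖AffineMap.lineMap x y t‖) (Set.Icc 0 1) :=
      (AffineMap.lineMap_continuous.norm).continuousOn
    obtain ⟨t, ht, hz⟩ := intermediate_value_Icc (zero_le_one' ℝ) hc
      (show R ∈ Set.Icc _ _ by simpa using ⟨hx'.le, hy'⟩)
    set z := AffineMap.lineMap x y t with hzdef
    have hz0 : φ z = 0 := hb z (by simpa using hz)
    have h1 := hK.dist_le_mul x (ball_subset_closedBall hx) z
      (by simpa using (le_of_eq hz))
    rw [hz0] at h1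
    refine h1.trans (mul_le_mul_of_nonneg_left ?_ K.2)
    rw [hzdef, dist_left_lineMap, Real.norm_of_nonneg ht.1]
    exact mul_le_of_le_one_left dist_nonneg ht.2
  refine ⟨K, LipschitzWith.of_dist_le_mul fun x y => ?_⟩
  by_cases hx : x ∈ ball (0 : EuclideanSpace ℝ (Fin n)) R <;>
    by_cases hy : y ∈ ball (0 : EuclideanSpace ℝ (Fin n)) R
  · rw [Set.indicator_of_mem hx, Set.indicator_of_mem hy]
    exact hK.dist_le_mul x (ball_subset_closedBall hx) y (ball_subset_closedBall hy)
  · rw [Set.indicator_of_mem hx, Set.indicator_of_notMem hy]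
    exact key x y hx hy
  · rw [Set.indicator_of_notMem hx, Set.indicator_of_mem hy, dist_comm, dist_comm x y]
    exact key y x hy hx
  · rw [Set.indicator_of_notMem hx, Set.indicator_of_notMem hy, dist_self]
    positivity

/-- The integral over the ball of a derivative of a function vanishing on the sphere is zero. -/
lemma integral_deriv_zero {n : ℕ} {R : ℝ} (hR : 0 < R) (φ : EuclideanSpace ℝ (Fin n) → ℝ)
    (hφ : ContDiff ℝ 1 φ) (hb : ∀ x ∈ sphere (0 : EuclideanSpace ℝ (Fin n)) R, φ x = 0)
    (v : EuclideanSpace ℝ (Fin n)) :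
    ∫ x in ball (0 : EuclideanSpace ℝ (Fin n)) R, fderiv ℝ φ x v = 0 := by
  obtain ⟨K, hK⟩ := lip_ext φ hφ hb
  have hcs : HasCompactSupport ((ball (0 : EuclideanSpace ℝ (Fin n)) R).indicator φ) := by
    refine HasCompactSupport.of_support_subset_isCompact (isCompact_closedBall 0 R) ?_
    exact (Set.support_indicator_subset).trans ball_subset_closedBall
  have h := LipschitzWith.integral_lineDeriv_mul_eq (μ := volume)
    (LipschitzWith.const (1 : ℝ)) hK hcs (-v)
  have hl : ∀ (c : ℝ) (x y : EuclideanSpace ℝ (Fin n)),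
      lineDeriv ℝ (fun _ : EuclideanSpace ℝ (Fin n) => c) x y = 0 := by
    intro c x y
    simp [lineDeriv]
  simp only [hl, zero_mul, integral_zero, neg_neg, mul_one] at h
  rw [← integral_indicator measurableSet_ball]
  refine Eq.trans ?_ h.symm
  apply integral_congr_ae
  have hs : ∀ᵐ x : EuclideanSpace ℝ (Fin n), x ∉ sphere (0 : EuclideanSpace ℝ (Fin n)) R :=
    measure_eq_zero_iff_ae_notMem.1 (Measure.addHaar_sphere_of_ne_zero volume 0 hR.ne')
  filter_upwards [hs] with x hx
  by_cases hxb : x ∈ ball (0 : EuclideanSpace ℝ (Fin n)) R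
  · rw [Set.indicator_of_mem hxb]
    have he : (ball (0 : EuclideanSpace ℝ (Fin n)) R).indicator φ =ᶠ[nhds x] φ := by
      filter_upwards [isOpen_ball.mem_nhds hxb] with y hy
      exact Set.indicator_of_mem hy _
    rw [he.lineDeriv_eq, ((hφ.differentiable one_ne_zero) x).lineDeriv_eq_fderiv]
  · rw [Set.indicator_of_notMem hxb]
    have hxc : x ∈ (closedBall (0 : EuclideanSpace ℝ (Fin n)) R)ᶜ := by
      simp only [mem_sphere, mem_ball, not_lt, Set.mem_compl_iff, mem_closedBall, not_le] at *
      exact lt_of_le_of_ne hxb (Ne.symm hx)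
    have he : (ball (0 : EuclideanSpace ℝ (Fin n)) R).indicator φ =ᶠ[nhds x] fun _ => 0 := by
      filter_upwards [isClosed_closedBall.isOpen_compl.mem_nhds hxc] with y hy
      exact Set.indicator_of_notMem (fun h => hy (ball_subset_closedBall h)) _
    rw [he.lineDeriv_eq, hl]

lemma contDiff_lapC {n : ℕ} {u : EuclideanSpace ℝ (Fin n) → ℂ} (hu : ContDiff ℝ (⊤ : ℕ∞) u) :
    ContDiff ℝ (⊤ : ℕ∞) (lapC n u) := by
  unfold lapC
  refine ContDiff.sum fun i _ => ?_
  have h1 : ContDiff ℝ (⊤ : ℕ∞) (fderiv ℝ u) := hu.fderiv_right (by simp)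
  have h2 : ContDiff ℝ (⊤ : ℕ∞) (fderiv ℝ (fderiv ℝ u)) := h1.fderiv_right (by simp)
  exact (h2.clm_apply contDiff_const).clm_apply contDiff_const

/-- The quadratic form of the bilaplacian with Navier conditions is real. -/
lemma im_zero {n : ℕ} {R : ℝ} (hR : 0 < R) {u : EuclideanSpace ℝ (Fin n) → ℂ}
    (hu : ContDiff ℝ (⊤ : ℕ∞) u)
    (hub : ∀ x ∈ sphere (0 : EuclideanSpace ℝ (Fin n)) R, u x = 0)
    (hlapub : ∀ x ∈ sphere (0 : EuclideanSpace ℝ (Fin n)) R, lapC n u x = 0) :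
    ∫ x in ball (0 : EuclideanSpace ℝ (Fin n)) R,
      (lapC n (lapC n u) x * (starRingEnd ℂ) (u x)).im = 0 := by
  set v := lapC n u with hv
  have hvs : ContDiff ℝ (⊤ : ℕ∞) v := contDiff_lapC hu
  have hu1 : ContDiff ℝ (⊤ : ℕ∞) (fderiv ℝ u) := hu.fderiv_right (by simp)
  have hv1 : ContDiff ℝ (⊤ : ℕ∞) (fderiv ℝ v) := hvs.fderiv_right (by simp)
  let e : Fin n → EuclideanSpace ℝ (Fin n) := fun i => EuclideanSpace.single i 1
  let φ : Fin n → EuclideanSpace ℝ (Fin n) → ℝ := fun i x =>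
    Complex.imCLM (fderiv ℝ v x (e i) * Complex.conjCLE (u x)
      - v x * Complex.conjCLE (fderiv ℝ u x (e i)))
  have hφ : ∀ i, ContDiff ℝ 1 (φ i) := by
    intro i
    have : ContDiff ℝ (⊤ : ℕ∞) (φ i) := by
      refine Complex.imCLM.contDiff.comp (ContDiff.sub (ContDiff.mul ?_ ?_) (ContDiff.mul hvs ?_))
      · exact hv1.clm_apply contDiff_const
      · exact Complex.conjCLE.contDiff.comp hu
      · exact Complex.conjCLE.contDiff.comp (hu1.clm_apply contDiff_const)
    exact this.of_le (by exact_mod_cast le_top)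
  have hφb : ∀ i, ∀ x ∈ sphere (0 : EuclideanSpace ℝ (Fin n)) R, φ i x = 0 := by
    intro i x hx
    simp [φ, hub x hx, hlapub x hx]
  have hd : ∀ i x, fderiv ℝ (φ i) x (e i) =
      (fderiv ℝ (fderiv ℝ v) x (e i) (e i) * (starRingEnd ℂ) (u x)
        - v x * (starRingEnd ℂ) (fderiv ℝ (fderiv ℝ u) x (e i) (e i))).im := by
    intro i x
    have a1 : HasFDerivAt u (fderiv ℝ u x) x := (hu.differentiable (by simp) x).hasFDerivAt
    have a2 : HasFDerivAt v (fderiv ℝ v x) x := (hvs.differentiable (by simp) x).hasFDerivAt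
    have a3 := ((hu1.differentiable (by simp) x).hasFDerivAt).clm_apply
      (hasFDerivAt_const (e i) x)
    have a4 := ((hv1.differentiable (by simp) x).hasFDerivAt).clm_apply
      (hasFDerivAt_const (e i) x)
    have b1 := (Complex.conjCLE.hasFDerivAt (x := u x)).comp x a1
    have b3 := (Complex.conjCLE.hasFDerivAt (x := fderiv ℝ u x (e i))).comp x a3
    have c := (Complex.imCLM.hasFDerivAt).comp x ((a4.mul b1).sub (a2.mul b3))
    have c' : fderiv ℝ (φ i) x = _ := c.fderiv
    rw [c']
    simp
    ring
  have hsum : ∀ x, (lapC n v x * (starRingEnd ℂ) (u x)).im = ∑ i, fderiv ℝ (φ i) x (e i) := by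
    intro x
    have h1 : (lapC n v x * (starRingEnd ℂ) (u x)).im
        = (lapC n v x * (starRingEnd ℂ) (u x) - v x * (starRingEnd ℂ) (lapC n u x)).im := by
      rw [← hv, Complex.mul_conj, Complex.sub_im, Complex.ofReal_im, sub_zero]
    rw [h1]
    simp only [hd]
    rw [← Complex.im_sum, Finset.sum_sub_distrib, ← Finset.sum_mul, ← Finset.mul_sum, ← map_sum]
    rfl
  simp only [hsum]
  rw [integral_finsetSum]
  · exact Finset.sum_eq_zero fun i _ => integral_deriv_zero hR (φ i) (hφ i) (hφb i) (e i)
  · intro i _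
    have hc : Continuous fun x => fderiv ℝ (φ i) x (e i) :=
      ((hφ i).continuous_fderiv one_ne_zero).clm_apply continuous_const
    exact (hc.continuousOn.integrableOn_compact (isCompact_closedBall 0 R)).mono_set
      ball_subset_closedBall

/-- Basic energy estimate. -/
lemma energy {n : ℕ} {R : ℝ} (hR : 0 < R) (V : EuclideanSpace ℝ (Fin n) → ℝ)
    {lam : ℂ} (hlam : lam.im ≠ 0)
    {f : EuclideanSpace ℝ (Fin n) → ℂ} (hf : Continuous f) {u : EuclideanSpace ℝ (Fin n) → ℂ}
    (hu : ContDiff ℝ (⊤ : ℕ∞) u)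
    (hequ : ∀ x ∈ closedBall (0 : EuclideanSpace ℝ (Fin n)) R,
      lapC n (lapC n u) x + (V x : ℂ) * u x - lam * u x = f x)
    (hub : ∀ x ∈ sphere (0 : EuclideanSpace ℝ (Fin n)) R, u x = 0)
    (hlapub : ∀ x ∈ sphere (0 : EuclideanSpace ℝ (Fin n)) R, lapC n u x = 0) :
    Real.sqrt (∫ x in ball (0 : EuclideanSpace ℝ (Fin n)) R, ‖u x‖ ^ 2)
      ≤ (1 / |lam.im|) * Real.sqrt (∫ x in ball (0 : EuclideanSpace ℝ (Fin n)) R, ‖f x‖ ^ 2) := by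
  have hint : ∀ g : EuclideanSpace ℝ (Fin n) → ℝ, Continuous g →
      IntegrableOn g (ball (0 : EuclideanSpace ℝ (Fin n)) R) := fun g hg =>
    (hg.continuousOn.integrableOn_compact (isCompact_closedBall 0 R)).mono_set
      ball_subset_closedBall
  have huc := hu.continuous
  have hpos : 0 < |lam.im| := abs_pos.2 hlam
  have h0 := im_zero hR hu hub hlapub
  have h1 : ∫ x in ball (0 : EuclideanSpace ℝ (Fin n)) R,
      (lapC n (lapC n u) x * (starRingEnd ℂ) (u x)).im =
      ∫ x in ball (0 : EuclideanSpace ℝ (Fin n)) R,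
        ((f x * (starRingEnd ℂ) (u x)).im + lam.im * ‖u x‖ ^ 2) := by
    refine setIntegral_congr_fun measurableSet_ball fun x hx => ?_
    have := hequ x (ball_subset_closedBall hx)
    rw [← this, ← Complex.normSq_eq_norm_sq]
    simp [Complex.normSq_apply]
    ring
  have hi1 : IntegrableOn (fun x => (f x * (starRingEnd ℂ) (u x)).im)
      (ball (0 : EuclideanSpace ℝ (Fin n)) R) :=
    hint _ (Complex.continuous_im.comp (hf.mul (Complex.continuous_conj.comp huc)))
  have hi2 : IntegrableOn (fun x => ‖u x‖ ^ 2) (ball (0 : EuclideanSpace ℝ (Fin n)) R) :=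
    hint _ (huc.norm.pow 2)
  have hi3 : IntegrableOn (fun x => ‖f x‖ ^ 2) (ball (0 : EuclideanSpace ℝ (Fin n)) R) :=
    hint _ (hf.norm.pow 2)
  rw [h0, integral_add hi1 (hi2.const_mul _), integral_const_mul] at h1
  set A := ∫ x in ball (0 : EuclideanSpace ℝ (Fin n)) R, ‖u x‖ ^ 2 with hA
  set B := ∫ x in ball (0 : EuclideanSpace ℝ (Fin n)) R, ‖f x‖ ^ 2 with hB
  set J := ∫ x in ball (0 : EuclideanSpace ℝ (Fin n)) R, (f x * (starRingEnd ℂ) (u x)).im with hJ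
  have hA0 : 0 ≤ A := integral_nonneg fun x => by positivity
  have h2 : |J| ≤ 1 / (2 * |lam.im|) * B + |lam.im| / 2 * A := by
    rw [hB, hA, ← integral_const_mul, ← integral_const_mul,
      ← integral_add (hi3.const_mul _) (hi2.const_mul _), hJ, ← Real.norm_eq_abs]
    refine norm_integral_le_of_norm_le ((hi3.const_mul _).add (hi2.const_mul _)) ?_
    refine Filter.Eventually.of_forall fun x => ?_
    have h3 : ‖(f x * (starRingEnd ℂ) (u x)).im‖ ≤ ‖f x‖ * ‖u x‖ := by
      refine (Complex.abs_im_le_norm _).trans ?_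
      simp
    refine h3.trans ?_
    have h4 : 1 / (2 * |lam.im|) * ‖f x‖ ^ 2 + |lam.im| / 2 * ‖u x‖ ^ 2 - ‖f x‖ * ‖u x‖
        = (‖f x‖ - |lam.im| * ‖u x‖) ^ 2 / (2 * |lam.im|) := by
      field_simp
      ring
    have h5 : 0 ≤ (‖f x‖ - |lam.im| * ‖u x‖) ^ 2 / (2 * |lam.im|) := by positivity
    show ‖f x‖ * ‖u x‖ ≤ 1 / (2 * |lam.im|) * ‖f x‖ ^ 2 + |lam.im| / 2 * ‖u x‖ ^ 2
    linarith
  have h6 : |J| = |lam.im| * A := by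
    have : J = -(lam.im * A) := by linarith
    rw [this, abs_neg, abs_mul, abs_of_nonneg hA0]
  have h7 : |lam.im| * A ≤ 1 / |lam.im| * B := by
    have : 1 / (2 * |lam.im|) * B = 1 / |lam.im| * B / 2 := by field_simp
    rw [this, h6] at h2
    linarith
  have h8 : A ≤ (1 / |lam.im|) ^ 2 * B := by
    have := mul_le_mul_of_nonneg_left h7 (one_div_pos.2 hpos).le
    have e : 1 / |lam.im| * (|lam.im| * A) = A := by field_simp
    rw [e] at this
    linarith [this, show 1 / |lam.im| * (1 / |lam.im| * B) = (1 / |lam.im|) ^ 2 * B by ring]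
  calc Real.sqrt A ≤ Real.sqrt ((1 / |lam.im|) ^ 2 * B) := Real.sqrt_le_sqrt h8
    _ = _ := by rw [Real.sqrt_mul (by positivity), Real.sqrt_sq (by positivity)]

/-- Chained L² estimate for the λ-derivative of solutions of the Navier problem for
`Δ² + V`: if `Δ²u + Vu − λu = f` and `Δ²w + Vw − λw = u` in `B_R` with
`u = Δu = w = Δw = 0` on `∂B_R`, then `‖w‖_{L²(B_R)} ≤ |Im λ|⁻² ‖f‖_{L²(B_R)}`. -/
theorem stmt11 (n : ℕ) (hn : 1 ≤ n) (R : ℝ) (hR : 0 < R)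
    (V : EuclideanSpace ℝ (Fin n) → ℝ) (hVmeas : Measurable V)
    (hVbdd : ∃ M : ℝ, ∀ x, |V x| ≤ M)
    (lam : ℂ) (hlam : lam.im ≠ 0)
    (f : EuclideanSpace ℝ (Fin n) → ℂ) (hf : Continuous f)
    (u w : EuclideanSpace ℝ (Fin n) → ℂ) (hu : ContDiff ℝ (⊤ : ℕ∞) u) (hw : ContDiff ℝ (⊤ : ℕ∞) w)
    (hequ : ∀ x ∈ closedBall (0 : EuclideanSpace ℝ (Fin n)) R,
      lapC n (lapC n u) x + (V x : ℂ) * u x - lam * u x = f x)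
    (heqw : ∀ x ∈ closedBall (0 : EuclideanSpace ℝ (Fin n)) R,
      lapC n (lapC n w) x + (V x : ℂ) * w x - lam * w x = u x)
    (hub : ∀ x ∈ sphere (0 : EuclideanSpace ℝ (Fin n)) R, u x = 0)
    (hlapub : ∀ x ∈ sphere (0 : EuclideanSpace ℝ (Fin n)) R, lapC n u x = 0)
    (hwb : ∀ x ∈ sphere (0 : EuclideanSpace ℝ (Fin n)) R, w x = 0)
    (hlapwb : ∀ x ∈ sphere (0 : EuclideanSpace ℝ (Fin n)) R, lapC n w x = 0) :
    Real.sqrt (∫ x in ball (0 : EuclideanSpace ℝ (Fin n)) R, ‖w x‖ ^ 2)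
      ≤ (1 / |lam.im| ^ 2)
        * Real.sqrt (∫ x in ball (0 : EuclideanSpace ℝ (Fin n)) R, ‖f x‖ ^ 2) := by
  have h1 := energy hR V hlam hf hu hequ hub hlapub
  have h2 := energy hR V hlam hu.continuous hw heqw hwb hlapwb
  refine h2.trans ((mul_le_mul_of_nonneg_left h1 (by positivity)).trans (le_of_eq ?_))
  rw [← mul_assoc]
  congr 1
  ring
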